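/- Let K be a field of characteristic zero and p(x_1,x_2,x_3,x_4) a multilinear polynomial of degree four over K. Then the image of p on UT_n is {0}, UT_n^{(1)}, UT_n^{(0)}, or UT_n. -/

import Mathlib

open Matrix

/-!
Substituting diagonal matrices for all variables but `x_k` multiplies the `(i, j)` entry of `x_k` by
a polynomial `f_k` in the diagonal entries at `i` and `j`, and the entries of `p` on the first
superdiagonal are governed by the same polynomials. So if the coefficients of `p` do not sum to
zero then the image is `UT_n`, and if they do but some `f_k` is a nonzero function then, by choosing
the diagonal matrices generically, the image is `UT_n^{(0)}`. If every `f_k` vanishes then the image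
lies in `UT_n^{(1)}`. When `p ≠ 0`, renumber the variables so that `x₀x₁x₂x₃` occurs in `p`, take
`x₀`, `x₂` to be generic diagonal matrices and `x₁` the shift matrix: prescribing the value of `p`
is then a first-order recursion along the diagonals of `x₃`, whose leading coefficients do not
vanish.
-/

section OrderedProducts

variable {R : Type*} [CommMonoid R] {m : ℕ}

theorem prod_Iio_fin_succ (f : Fin (m + 1) → R) (r : Fin m) :
    ∏ p < r.succ, f p = f 0 * ∏ p < r, f p.succ := by
  have hIio : Finset.Iio r.succ = insert 0 (Finset.Ioo 0 r.succ) := by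
    rw [Finset.Ioo_insert_left r.succ_pos, ← bot_eq_zero, Finset.Ico_bot]
  rw [hIio, Finset.prod_insert Finset.left_notMem_Ioo, ← Fin.map_succEmb_Iio, Finset.prod_map]
  rfl

variable {S F : Type*} [Monoid S] [FunLike F R S] [MonoidHomClass F R S]

theorem prod_ofFn_eq_of_forall_ne (f : F) {M : Fin m → S} {d : Fin m → R} {r : Fin m}
    (h : ∀ p, p ≠ r → M p = f (d p)) :
    (List.ofFn M).prod = f (∏ p < r, d p) * M r * f (∏ p > r, d p) := by
  induction m with
  | zero => exact r.elim0
  | succ m ih =>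
    rw [List.ofFn_succ, List.prod_cons]
    cases r using Fin.cases with
    | zero =>
      have htail : (fun p : Fin m => M p.succ) = fun p => f (d p.succ) :=
        funext fun p => h _ p.succ_ne_zero
      rw [htail, Fin.prod_Ioi_zero, ← Fin.prod_ofFn, ← List.prod_hom, List.map_ofFn]
      simp [Function.comp_def, ← bot_eq_zero (α := Fin (m + 1))]
    | succ r =>
      rw [ih (d := fun p => d p.succ) (r := r) fun p hp => h _ (Fin.succ_injective _ |>.ne hp),
        h 0 r.succ_ne_zero.symm, prod_Iio_fin_succ, Fin.prod_Ioi_succ, map_mul]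
      simp only [mul_assoc]

theorem prod_ofFn_eq_of_forall_ne_ne (f : F) {M : Fin m → S} {d : Fin m → R} {r s : Fin m}
    (hrs : r < s) (h : ∀ p, p ≠ r → p ≠ s → M p = f (d p)) :
    (List.ofFn M).prod =
      f (∏ p < r, d p) * M r * f (∏ p ∈ Finset.Ioo r s, d p) * M s * f (∏ p > s, d p) := by
  induction m with
  | zero => exact r.elim0
  | succ m ih =>
    rw [List.ofFn_succ, List.prod_cons]
    cases s using Fin.cases with
    | zero => exact absurd hrs r.not_lt_zero
    | succ s =>
      cases r using Fin.cases with
      | zero =>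
        rw [prod_ofFn_eq_of_forall_ne f (d := fun p => d p.succ) (r := s)
          fun p hp => h _ p.succ_ne_zero (Fin.succ_injective _ |>.ne hp),
          ← Fin.map_succEmb_Iio, Finset.prod_map, Fin.prod_Ioi_succ]
        simp [mul_assoc, ← bot_eq_zero (α := Fin (m + 1))]
      | succ r =>
        rw [ih (d := fun p => d p.succ) (Fin.succ_lt_succ_iff.mp hrs) fun p hr hs =>
            h _ (Fin.succ_injective _ |>.ne hr) (Fin.succ_injective _ |>.ne hs),
          h 0 r.succ_ne_zero.symm s.succ_ne_zero.symm, prod_Iio_fin_succ, Fin.prod_Ioo_succ,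
          Fin.prod_Ioi_succ, map_mul]
        simp only [mul_assoc]

end OrderedProducts

section UpperTriangular

variable {R ι : Type*} [CommSemiring R] [Fintype ι] [LinearOrder ι] {m : ℕ}

theorem isUpperTriangular_prod_ofFn {M : Fin m → Matrix ι ι R} (hM : ∀ p, (M p).IsUpperTriangular) :
    (List.ofFn M).prod.IsUpperTriangular :=
  list_prod_mem (S := blockTriangularSubsemiring R id) (List.forall_mem_ofFn_iff.mpr hM)

theorem mul_apply_self_of_isUpperTriangular {A B : Matrix ι ι R} (hA : A.IsUpperTriangular)
    (hB : B.IsUpperTriangular) (i : ι) : (A * B) i i = A i i * B i i := by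
  rw [mul_apply]
  refine Finset.sum_eq_single i (fun c _ hc => ?_) (by simp)
  rcases lt_or_gt_of_ne hc with h | h
  · rw [hA h, zero_mul]
  · rw [hB h, mul_zero]

theorem mul_apply_of_isUpperTriangular_of_covBy {A B : Matrix ι ι R} (hA : A.IsUpperTriangular)
    (hB : B.IsUpperTriangular) {i j : ι} (hij : i ⋖ j) :
    (A * B) i j = A i i * B i j + A i j * B j j := by
  rw [mul_apply]
  refine Fintype.sum_eq_add i j hij.ne fun c ⟨hci, hcj⟩ => ?_
  rcases lt_or_ge c i with h | h
  · rw [hA h, zero_mul]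
  · rw [hB (lt_of_le_of_ne (hij.ge_of_gt (lt_of_le_of_ne h hci.symm)) hcj.symm), mul_zero]

theorem prod_ofFn_apply_self {M : Fin m → Matrix ι ι R} (hM : ∀ p, (M p).IsUpperTriangular)
    (i : ι) : (List.ofFn M).prod i i = ∏ p, M p i i := by
  induction m with
  | zero => simp
  | succ m ih =>
    rw [List.ofFn_succ, List.prod_cons, mul_apply_self_of_isUpperTriangular (hM 0)
      (isUpperTriangular_prod_ofFn fun p => hM p.succ), ih fun p => hM p.succ, Fin.prod_univ_succ]

theorem prod_ofFn_apply_of_covBy {M : Fin m → Matrix ι ι R} (hM : ∀ p, (M p).IsUpperTriangular)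
    {i j : ι} (hij : i ⋖ j) :
    (List.ofFn M).prod i j = ∑ r, M r i j * ((∏ p < r, M p i i) * ∏ p > r, M p j j) := by
  induction m with
  | zero => simp [hij.ne]
  | succ m ih =>
    have htail := fun p : Fin m => hM p.succ
    rw [List.ofFn_succ, List.prod_cons, mul_apply_of_isUpperTriangular_of_covBy (hM 0)
      (isUpperTriangular_prod_ofFn htail) hij, ih htail, prod_ofFn_apply_self htail,
      Fin.sum_univ_succ, add_comm, Fin.prod_Ioi_zero, Finset.mul_sum]
    congr 1
    · simp [← bot_eq_zero (α := Fin (m + 1))]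
    · refine Finset.sum_congr rfl fun r _ => ?_
      rw [prod_Iio_fin_succ, Fin.prod_Ioi_succ]
      ring

end UpperTriangular

section Multilinear

/-- The value at `A` of the multilinear polynomial
`∑ σ, α σ • x_{σ 0} ⋯ x_{σ (m - 1)}` in noncommuting variables. -/
def multilinearEval {R S : Type*} [Semiring R] [Semiring S] [Module R S] {m : ℕ}
    (α : Equiv.Perm (Fin m) → R) (A : Fin m → S) : S :=
  ∑ σ, α σ • (List.ofFn fun p => A (σ p)).prod

/-- The factor by which the multilinear polynomial with coefficients `α` scales the variable `x_k`
when every other variable `x_q` acts as `u q` to the left of `x_k` and as `v q` to its right. -/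
def splitCoeff {R : Type*} [CommSemiring R] {m : ℕ} (α : Equiv.Perm (Fin m) → R) (k : Fin m)
    (u v : Fin m → R) : R :=
  ∑ σ, α σ * ((∏ p < σ.symm k, u (σ p)) * ∏ p > σ.symm k, v (σ p))

/-- The analogue of `splitCoeff` for two variables: the contribution of the monomials in which `x_k`
precedes `x_l`, where every other `x_q` acts as `u q` before `x_k`, as `v q` between `x_k` and
`x_l`, and as `w q` after `x_l`. -/
def splitCoeff₂ {R : Type*} [CommSemiring R] {m : ℕ} (α : Equiv.Perm (Fin m) → R) (k l : Fin m)
    (u v w : Fin m → R) : R :=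
  ∑ σ with σ.symm k < σ.symm l, α σ * ((∏ p < σ.symm k, u (σ p)) *
    (∏ p ∈ Finset.Ioo (σ.symm k) (σ.symm l), v (σ p)) * ∏ p > σ.symm l, w (σ p))

theorem splitCoeff_one_one {R : Type*} [CommSemiring R] {m : ℕ} (α : Equiv.Perm (Fin m) → R)
    (k : Fin m) : splitCoeff α k 1 1 = ∑ σ, α σ := by
  simp [splitCoeff]

theorem multilinearEval_four {R S : Type*} [Semiring R] [Semiring S] [Module R S]
    (α : Equiv.Perm (Fin 4) → R) (A : Fin 4 → S) :
    multilinearEval α A = ∑ σ, α σ • (A (σ 0) * A (σ 1) * A (σ 2) * A (σ 3)) := by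
  simp [multilinearEval, List.ofFn_succ, Fin.succ_one_eq_two, mul_assoc]

theorem multilinearEval_mul_left {R S : Type*} [Semiring R] [Semiring S] [Module R S] {m : ℕ}
    (α : Equiv.Perm (Fin m) → R) (τ : Equiv.Perm (Fin m)) (A : Fin m → S) :
    multilinearEval (fun σ => α (τ * σ)) (fun q => A (τ q)) = multilinearEval α A :=
  Equiv.sum_comp (Equiv.mulLeft τ) fun σ => α σ • (List.ofFn fun p => A (σ p)).prod

variable {R ι : Type*} [CommSemiring R] [Fintype ι] [LinearOrder ι] {m : ℕ}

theorem multilinearEval_apply (α : Equiv.Perm (Fin m) → R) (A : Fin m → Matrix ι ι R) (i j : ι) :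
    multilinearEval α A i j = ∑ σ, α σ * (List.ofFn fun p => A (σ p)).prod i j := by
  simp [multilinearEval, Matrix.sum_apply]

theorem isUpperTriangular_multilinearEval (α : Equiv.Perm (Fin m) → R) {A : Fin m → Matrix ι ι R}
    (hA : ∀ q, (A q).IsUpperTriangular) : (multilinearEval α A).IsUpperTriangular :=
  sum_mem (S := blockTriangularSubalgebra R R id) fun σ _ =>
    Subalgebra.smul_mem _ (isUpperTriangular_prod_ofFn fun p => hA (σ p)) (α σ)

theorem multilinearEval_apply_self (α : Equiv.Perm (Fin m) → R) {A : Fin m → Matrix ι ι R}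
    (hA : ∀ q, (A q).IsUpperTriangular) (i : ι) :
    multilinearEval α A i i = (∑ σ, α σ) * ∏ q, A q i i := by
  rw [multilinearEval_apply, Finset.sum_mul]
  refine Finset.sum_congr rfl fun σ _ => ?_
  rw [prod_ofFn_apply_self fun p => hA (σ p), Equiv.prod_comp σ fun q => A q i i]

theorem multilinearEval_apply_of_covBy (α : Equiv.Perm (Fin m) → R) {A : Fin m → Matrix ι ι R}
    (hA : ∀ q, (A q).IsUpperTriangular) {i j : ι} (hij : i ⋖ j) :
    multilinearEval α A i j =
      ∑ k, A k i j * splitCoeff α k (fun q => A q i i) (fun q => A q j j) := by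
  simp only [splitCoeff, Finset.mul_sum]
  rw [Finset.sum_comm, multilinearEval_apply]
  refine Finset.sum_congr rfl fun σ _ => ?_
  rw [prod_ofFn_apply_of_covBy (fun p => hA (σ p)) hij, Finset.mul_sum,
    ← Equiv.sum_comp σ.symm]
  refine Finset.sum_congr rfl fun k _ => ?_
  rw [σ.apply_symm_apply]
  ring

theorem multilinearEval_apply_of_diagonal (α : Equiv.Perm (Fin m) → R) {A : Fin m → Matrix ι ι R}
    {d : ι → Fin m → R} {k : Fin m} (hA : ∀ q, q ≠ k → A q = diagonal fun i => d i q) (i j : ι) :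
    multilinearEval α A i j = A k i j * splitCoeff α k (d i) (d j) := by
  rw [multilinearEval_apply, splitCoeff, Finset.mul_sum]
  refine Finset.sum_congr rfl fun σ _ => ?_
  have hword := prod_ofFn_eq_of_forall_ne (diagonalRingHom ι R)
    (M := fun p => A (σ p)) (d := fun p i => d i (σ p)) (r := σ.symm k)
    fun p hp => hA _ fun h => hp (by rw [← h, σ.symm_apply_apply])
  simp only [diagonalRingHom_apply, σ.apply_symm_apply] at hword
  rw [hword, mul_diagonal, diagonal_mul, Finset.prod_apply, Finset.prod_apply]
  ring

theorem prod_ofFn_perm_apply_of_diagonal {A : Fin m → Matrix ι ι R} {d : ι → Fin m → R}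
    {k l : Fin m} (hA : ∀ q, q ≠ k → q ≠ l → A q = diagonal fun i => d i q)
    {σ : Equiv.Perm (Fin m)} (hσ : σ.symm k < σ.symm l) (i j : ι) :
    (List.ofFn fun p => A (σ p)).prod i j = ∑ c, A k i c * A l c j *
      ((∏ p < σ.symm k, d i (σ p)) * (∏ p ∈ Finset.Ioo (σ.symm k) (σ.symm l), d c (σ p)) *
        ∏ p > σ.symm l, d j (σ p)) := by
  have hword := prod_ofFn_eq_of_forall_ne_ne (diagonalRingHom ι R)
    (M := fun p => A (σ p)) (d := fun p i => d i (σ p)) hσ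
    fun p hk hl => hA _ (fun h => hk (by rw [← h, σ.symm_apply_apply]))
      fun h => hl (by rw [← h, σ.symm_apply_apply])
  simp only [diagonalRingHom_apply, σ.apply_symm_apply] at hword
  rw [hword, mul_diagonal, mul_apply, Finset.sum_mul]
  refine Finset.sum_congr rfl fun c _ => ?_
  simp only [mul_diagonal, diagonal_mul, Finset.prod_apply]
  ring

theorem multilinearEval_apply_of_diagonal₂ (α : Equiv.Perm (Fin m) → R) {A : Fin m → Matrix ι ι R}
    {d : ι → Fin m → R} {k l : Fin m} (hkl : k ≠ l)
    (hA : ∀ q, q ≠ k → q ≠ l → A q = diagonal fun i => d i q) (i j : ι) :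
    multilinearEval α A i j =
      ∑ c, A k i c * A l c j * splitCoeff₂ α k l (d i) (d c) (d j) +
        ∑ c, A l i c * A k c j * splitCoeff₂ α l k (d i) (d c) (d j) := by
  have hnot (σ : Equiv.Perm (Fin m)) : ¬ σ.symm k < σ.symm l ↔ σ.symm l < σ.symm k :=
    ⟨fun h => lt_of_le_of_ne (not_lt.mp h) (σ.symm.injective.ne hkl.symm), fun h => h.asymm⟩
  rw [multilinearEval_apply,
    ← Finset.sum_filter_add_sum_filter_not _ fun σ => σ.symm k < σ.symm l]
  simp only [splitCoeff₂, Finset.mul_sum, hnot]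
  congr 1 <;> rw [Finset.sum_comm] <;> refine Finset.sum_congr rfl fun σ hσ => ?_
  · rw [prod_ofFn_perm_apply_of_diagonal hA (Finset.mem_filter.mp hσ).2, Finset.mul_sum]
    exact Finset.sum_congr rfl fun c _ => by ring
  · rw [prod_ofFn_perm_apply_of_diagonal (fun q hl hk => hA q hk hl) (Finset.mem_filter.mp hσ).2,
      Finset.mul_sum]
    exact Finset.sum_congr rfl fun c _ => by ring

end Multilinear

section GeneralPosition

variable {K ι : Type*} [CommRing K] [IsDomain K] [Infinite K] [Finite ι] {m : ℕ}

open MvPolynomial in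
theorem exists_forall_injective_eval_ne_zero {ρ τ : Type*} [Finite ρ] {P : MvPolynomial (ρ × τ) K}
    (hP : P ≠ 0) :
    ∃ d : ι → τ → K, ∀ e : ρ → ι, e.Injective → eval (fun x => d (e x.1) x.2) P ≠ 0 := by
  have := Fintype.ofFinite (ρ ↪ ι)
  let Q : MvPolynomial (ι × τ) K := ∏ e : ρ ↪ ι, rename (Prod.map e id) P
  have hQ : Q ≠ 0 := Finset.prod_ne_zero_iff.mpr fun e _ h =>
    hP (rename_injective _ (e.injective.prodMap Function.injective_id) (by rw [h, map_zero]))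
  obtain ⟨x, hx⟩ : ∃ x, eval x Q ≠ 0 := by
    by_contra! h
    exact hQ (MvPolynomial.funext fun x => by rw [h x, map_zero])
  rw [map_prod, Finset.prod_ne_zero_iff] at hx
  refine ⟨fun i q => x (i, q), fun e he => ?_⟩
  simpa only [eval_rename, Function.comp_def, Prod.map, id, Function.Embedding.coeFn_mk]
    using hx ⟨e, he⟩ (Finset.mem_univ _)

open MvPolynomial in
theorem exists_forall_splitCoeff_ne_zero {α : Equiv.Perm (Fin m) → K} {k : Fin m}
    {u v : Fin m → K} (h : splitCoeff α k u v ≠ 0) :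
    ∃ d : ι → Fin m → K, ∀ i j, i ≠ j → splitCoeff α k (d i) (d j) ≠ 0 := by
  let P : MvPolynomial (Fin 2 × Fin m) K :=
    splitCoeff (fun σ => C (α σ)) k (fun q => X (0, q)) fun q => X (1, q)
  have heval (x : Fin 2 → Fin m → K) :
      eval (fun y => x y.1 y.2) P = splitCoeff α k (x 0) (x 1) := by
    simp [P, splitCoeff]
  have hP : P ≠ 0 := fun hP => h <| by simpa [hP] using (heval ![u, v]).symm
  obtain ⟨d, hd⟩ := exists_forall_injective_eval_ne_zero (ι := ι) hP
  refine ⟨d, fun i j hij => ?_⟩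
  have hinj : Function.Injective ![i, j] := by
    simp [Function.Injective, Fin.forall_fin_succ, hij, hij.symm]
  simpa [heval fun a => d (![i, j] a)] using hd _ hinj

open MvPolynomial in
theorem exists_forall_splitCoeff₂_ne_zero {α : Equiv.Perm (Fin m) → K} {k l : Fin m}
    {u v w : Fin m → K} (h : splitCoeff₂ α k l u v w ≠ 0) :
    ∃ d : ι → Fin m → K, ∀ i c j, i ≠ c → i ≠ j → c ≠ j →
      splitCoeff₂ α k l (d i) (d c) (d j) ≠ 0 := by
  let P : MvPolynomial (Fin 3 × Fin m) K :=
    splitCoeff₂ (fun σ => C (α σ)) k l (fun q => X (0, q)) (fun q => X (1, q)) fun q => X (2, q)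
  have heval (x : Fin 3 → Fin m → K) :
      eval (fun y => x y.1 y.2) P = splitCoeff₂ α k l (x 0) (x 1) (x 2) := by
    simp [P, splitCoeff₂]
  have hP : P ≠ 0 := fun hP => h <| by simpa [hP] using (heval ![u, v, w]).symm
  obtain ⟨d, hd⟩ := exists_forall_injective_eval_ne_zero (ι := ι) hP
  refine ⟨d, fun i c j hic hij hcj => ?_⟩
  have hinj : Function.Injective ![i, c, j] := by
    simp [Function.Injective, Fin.forall_fin_succ, hic, hij, hcj, hic.symm, hij.symm, hcj.symm]
  simpa [heval fun a => d (![i, c, j] a)] using hd _ hinj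

end GeneralPosition

section Image

/-- The image of the multilinear polynomial with coefficients `α` on the upper triangular matrices
with index type `ι`. -/
def upperTriangularImage {R : Type*} (ι : Type*) [CommSemiring R] [Fintype ι] [LinearOrder ι]
    {m : ℕ} (α : Equiv.Perm (Fin m) → R) : Set (Matrix ι ι R) :=
  {X | ∃ A : Fin m → Matrix ι ι R, (∀ q, (A q).IsUpperTriangular) ∧ X = multilinearEval α A}

variable {R K ι : Type*} [CommSemiring R] [Field K] [Fintype ι] [LinearOrder ι] {m : ℕ}

theorem upperTriangularImage_zero :
    upperTriangularImage ι (0 : Equiv.Perm (Fin m) → R) = {0} := by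
  ext X
  simp only [upperTriangularImage, multilinearEval, Pi.zero_apply, zero_smul, Finset.sum_const_zero,
    Set.mem_ofPred_eq, Set.mem_singleton_iff]
  exact ⟨fun ⟨_, _, hX⟩ => hX, fun hX => ⟨0, fun _ => blockTriangular_zero, hX⟩⟩

theorem upperTriangularImage_mul_left (α : Equiv.Perm (Fin m) → R) (τ : Equiv.Perm (Fin m)) :
    upperTriangularImage ι (fun σ => α (τ * σ)) = upperTriangularImage ι α := by
  ext X
  constructor
  · rintro ⟨A, hA, rfl⟩
    refine ⟨fun q => A (τ.symm q), fun q => hA _, ?_⟩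
    rw [← multilinearEval_mul_left α τ]
    simp only [τ.symm_apply_apply]
  · rintro ⟨A, hA, rfl⟩
    exact ⟨fun q => A (τ q), fun q => hA _, (multilinearEval_mul_left α τ A).symm⟩

theorem apply_eq_zero_of_mem_upperTriangularImage_of_le {α : Equiv.Perm (Fin m) → R}
    (hα : ∑ σ, α σ = 0) {X : Matrix ι ι R} (hX : X ∈ upperTriangularImage ι α) {a b : ι}
    (hba : b ≤ a) : X a b = 0 := by
  obtain ⟨A, hA, rfl⟩ := hX
  rcases hba.lt_or_eq with hlt | rfl
  · exact isUpperTriangular_multilinearEval α hA hlt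
  · rw [multilinearEval_apply_self α hA, hα, zero_mul]

theorem apply_eq_zero_of_mem_upperTriangularImage_of_covBy {α : Equiv.Perm (Fin m) → R}
    (hsplit : ∀ k u v, splitCoeff α k u v = 0) {X : Matrix ι ι R}
    (hX : X ∈ upperTriangularImage ι α) {a b : ι} (hab : a ⋖ b) : X a b = 0 := by
  obtain ⟨A, hA, rfl⟩ := hX
  simp only [multilinearEval_apply_of_covBy α hA hab, hsplit, mul_zero, Finset.sum_const_zero]

theorem mem_upperTriangularImage_of_splitCoeff_ne_zero {α : Equiv.Perm (Fin m) → K} {k : Fin m}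
    {d : ι → Fin m → K} {Z : Matrix ι ι K} (hZ : Z.IsUpperTriangular)
    (h : ∀ i j, Z i j ≠ 0 → splitCoeff α k (d i) (d j) ≠ 0) :
    Z ∈ upperTriangularImage ι α := by
  let B : Matrix ι ι K := of fun i j => Z i j / splitCoeff α k (d i) (d j)
  have hB : B.IsUpperTriangular := fun i j hij => by simp [B, hZ hij]
  refine ⟨fun q => if q = k then B else diagonal fun i => d i q, fun q => ?_, ?_⟩
  · dsimp only
    split_ifs
    · exact hB
    · exact blockTriangular_diagonal _
  · ext i j
    rw [multilinearEval_apply_of_diagonal α (fun q hq => if_neg hq) i j, if_pos rfl]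
    by_cases hij : Z i j = 0
    · simp [B, hij]
    · exact (div_mul_cancel₀ _ (h i j hij)).symm

theorem upperTriangularImage_eq_of_sum_ne_zero [NeZero m] {α : Equiv.Perm (Fin m) → K}
    (hα : ∑ σ, α σ ≠ 0) :
    upperTriangularImage ι α = {X | ∀ a b, b < a → X a b = 0} := by
  refine Set.Subset.antisymm ?_ fun Z hZ => ?_
  · rintro X ⟨A, hA, rfl⟩
    exact fun a b hab => isUpperTriangular_multilinearEval α hA hab
  · exact mem_upperTriangularImage_of_splitCoeff_ne_zero (k := 0) (d := 1) (fun a b => hZ a b)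
      fun i j _ => by rwa [Pi.one_def, splitCoeff_one_one]

theorem upperTriangularImage_eq_of_splitCoeff_ne_zero [Infinite K] {α : Equiv.Perm (Fin m) → K}
    (hα : ∑ σ, α σ = 0) {k : Fin m} {u v : Fin m → K} (hk : splitCoeff α k u v ≠ 0) :
    upperTriangularImage ι α = {X | ∀ a b, b ≤ a → X a b = 0} := by
  refine Set.Subset.antisymm
    (fun X hX a b => apply_eq_zero_of_mem_upperTriangularImage_of_le hα hX) fun Z hZ => ?_
  obtain ⟨d, hd⟩ := exists_forall_splitCoeff_ne_zero (ι := ι) hk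
  exact mem_upperTriangularImage_of_splitCoeff_ne_zero (fun a b hab => hZ a b hab.le)
    fun i j hij => hd i j fun h => hij (hZ i j h.ge)

end Image

section Shift

/-- The nilpotent shift, with ones on the first superdiagonal and zeros elsewhere: multiplying by it
on the left moves rows up by one, and on the right moves columns to the right by one. -/
def shiftMatrix (R : Type*) [Zero R] [One R] (n : ℕ) : Matrix (Fin n) (Fin n) R :=
  of fun a b => if (b : ℕ) = a + 1 then 1 else 0

variable {R : Type*} {n : ℕ}

section ZeroOne

variable [Zero R] [One R]

theorem isUpperTriangular_shiftMatrix : (shiftMatrix R n).IsUpperTriangular :=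
  fun a b hba => if_neg (by have : (b : ℕ) < a := hba; lia)

theorem shiftMatrix_apply_zero (a : Fin (n + 1)) : shiftMatrix R (n + 1) a 0 = 0 := by
  simp [shiftMatrix]

theorem shiftMatrix_last_apply (b : Fin (n + 1)) : shiftMatrix R (n + 1) (Fin.last n) b = 0 :=
  if_neg b.isLt.ne

end ZeroOne

variable [NonAssocSemiring R]

theorem sum_shiftMatrix_castSucc_mul (i : Fin n) (f : Fin (n + 1) → R) :
    ∑ c, shiftMatrix R (n + 1) i.castSucc c * f c = f i.succ := by
  rw [Fintype.sum_eq_single i.succ fun c hc => ?_]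
  · simp [shiftMatrix]
  · rw [shiftMatrix, of_apply, if_neg fun h => hc (Fin.ext (by simpa using h)), zero_mul]

theorem sum_mul_shiftMatrix_succ (f : Fin (n + 1) → R) (j : Fin n) :
    ∑ c, f c * shiftMatrix R (n + 1) c j.succ = f j.castSucc := by
  rw [Fintype.sum_eq_single j.castSucc fun c hc => ?_]
  · simp [shiftMatrix]
  · rw [shiftMatrix, of_apply, if_neg fun h => hc (Fin.ext (by simpa using h.symm)), mul_zero]

end Shift

section Recursion

variable {K : Type*} [Field K] {m n : ℕ}

theorem exists_strictlyUpper_recursion (U V Z : Fin n → Fin n → K)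
    (hU : ∀ i j, i < j → U i j ≠ 0) :
    ∃ Y : Matrix (Fin (n + 1)) (Fin (n + 1)) K, (∀ a b, b ≤ a → Y a b = 0) ∧
      ∀ i j, i < j → Y i.succ j.succ * U i j + Y i.castSucc j.castSucc * V i j = Z i j := by
  let Y : Fin (n + 1) → Fin (n + 1) → K := fun a => Fin.induction 0
    (fun i y => Fin.cases 0 fun j => if i < j then (Z i j - y j.castSucc * V i j) / U i j else 0) a
  have hY (i j : Fin n) : Y i.succ j.succ =
      if i < j then (Z i j - Y i.castSucc j.castSucc * V i j) / U i j else 0 := by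
    simp [Y]
  refine ⟨of Y, fun a b hab => ?_, fun i j hij => ?_⟩
  · cases a using Fin.cases with
    | zero => rfl
    | succ i =>
      cases b using Fin.cases with
      | zero => rfl
      | succ j => exact (hY i j).trans (if_neg (Fin.succ_le_succ_iff.mp hab).not_gt)
  · rw [of_apply, of_apply, hY, if_pos hij, div_mul_cancel₀ _ (hU i j hij), sub_add_cancel]

theorem exists_strictlyUpper_sum_shiftMatrix_eq {U : Fin (n + 1) → Fin (n + 1) → Fin (n + 1) → K}
    (hU : ∀ a c b, a ≠ c → a ≠ b → c ≠ b → U a c b ≠ 0)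
    (V : Fin (n + 1) → Fin (n + 1) → Fin (n + 1) → K) {Z : Matrix (Fin (n + 1)) (Fin (n + 1)) K}
    (hZ : ∀ a b : Fin (n + 1), (b : ℕ) ≤ a + 1 → Z a b = 0) :
    ∃ Y : Matrix (Fin (n + 1)) (Fin (n + 1)) K, (∀ a b, b ≤ a → Y a b = 0) ∧
      ∀ a b, ∑ c, shiftMatrix K (n + 1) a c * Y c b * U a c b +
        ∑ c, Y a c * shiftMatrix K (n + 1) c b * V a c b = Z a b := by
  obtain ⟨Y, hY, hrec⟩ := exists_strictlyUpper_recursion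
    (fun i j => U i.castSucc i.succ j.succ) (fun i j => V i.castSucc j.castSucc j.succ)
    (fun i j => Z i.castSucc j.succ) fun i j hij => hU _ _ _ i.castSucc_lt_succ.ne
      (i.castSucc_lt_succ.trans (Fin.succ_lt_succ_iff.mpr hij)).ne (Fin.succ_lt_succ_iff.mpr hij).ne
  refine ⟨Y, hY, fun a b => ?_⟩
  cases b using Fin.cases with
  | zero => simp [hY _ 0 (Fin.zero_le _), shiftMatrix_apply_zero, hZ a 0 (Nat.zero_le _)]
  | succ j =>
    cases a using Fin.lastCases with
    | last =>
      simp [hY _ _ (Fin.le_last _), shiftMatrix_last_apply, hZ (Fin.last n) j.succ (by simp)]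
    | cast i =>
      simp only [mul_assoc (shiftMatrix K (n + 1) _ _), mul_right_comm (Y _ _)]
      rw [sum_shiftMatrix_castSucc_mul, sum_mul_shiftMatrix_succ]
      rcases lt_or_ge i j with hij | hji
      · exact hrec i j hij
      · rw [hY _ _ (Fin.succ_le_succ_iff.mpr hji), hY _ _ (Fin.castSucc_le_castSucc_iff.mpr hji),
          hZ _ _ (by simpa using hji), zero_mul, zero_mul, add_zero]

theorem mem_upperTriangularImage_of_splitCoeff₂_ne_zero [Infinite K] {α : Equiv.Perm (Fin m) → K}
    {k l : Fin m} (hkl : k ≠ l) {u v w : Fin m → K} (h : splitCoeff₂ α k l u v w ≠ 0)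
    {Z : Matrix (Fin n) (Fin n) K} (hZ : ∀ a b : Fin n, (b : ℕ) ≤ a + 1 → Z a b = 0) :
    Z ∈ upperTriangularImage (Fin n) α := by
  cases n with
  | zero => exact ⟨0, fun _ => blockTriangular_zero, Subsingleton.elim _ _⟩
  | succ n =>
    obtain ⟨d, hd⟩ := exists_forall_splitCoeff₂_ne_zero (ι := Fin (n + 1)) h
    obtain ⟨Y, hY, hYZ⟩ := exists_strictlyUpper_sum_shiftMatrix_eq hd
      (fun a c b => splitCoeff₂ α l k (d a) (d c) (d b)) hZ
    let A : Fin m → Matrix (Fin (n + 1)) (Fin (n + 1)) K := fun q =>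
      if q = k then shiftMatrix K (n + 1) else if q = l then Y else diagonal fun i => d i q
    have hAk : A k = shiftMatrix K (n + 1) := if_pos rfl
    have hAl : A l = Y := (if_neg hkl.symm).trans (if_pos rfl)
    have hAd : ∀ q, q ≠ k → q ≠ l → A q = diagonal fun i => d i q :=
      fun q hqk hql => (if_neg hqk).trans (if_neg hql)
    refine ⟨A, fun q => ?_, ?_⟩
    · by_cases hqk : q = k
      · rw [hqk, hAk]
        exact isUpperTriangular_shiftMatrix
      by_cases hql : q = l
      · rw [hql, hAl]
        exact fun a b hba => hY a b hba.le
      rw [hAd q hqk hql]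
      exact blockTriangular_diagonal _
    · ext a b
      rw [multilinearEval_apply_of_diagonal₂ α hkl hAd, hAk, hAl, hYZ]

theorem splitCoeff₂_single_single_zero {R : Type*} [CommSemiring R] (α : Equiv.Perm (Fin 4) → R) :
    splitCoeff₂ α 1 3 (Pi.single 0 1) (Pi.single 2 1) 0 = α 1 := by
  have hunique : ∀ σ : Equiv.Perm (Fin 4), σ.symm 1 < σ.symm 3 → (∀ p < σ.symm 1, σ p = 0) →
      (∀ p ∈ Finset.Ioo (σ.symm 1) (σ.symm 3), σ p = 2) → (∀ p, ¬ σ.symm 3 < p) → σ = 1 := by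
    decide
  rw [splitCoeff₂, Finset.sum_eq_single_of_mem 1 (by decide)]
  · have h0 : Finset.Iio (1 : Fin 4) = {0} := by decide
    have h2 : Finset.Ioo (1 : Fin 4) 3 = {2} := by decide
    have h3 : Finset.Ioi (3 : Fin 4) = ∅ := by decide
    simp [h0, h2, h3, ← Equiv.Perm.inv_def]
  · intro σ hσ hne
    by_contra hterm
    have hprod := right_ne_zero_of_mul hterm
    refine hne (hunique σ (Finset.mem_filter.mp hσ).2 (fun p hp => ?_) (fun p hp => ?_)
      fun p hp => ?_)
    · by_contra hp0
      exact left_ne_zero_of_mul (left_ne_zero_of_mul hprod)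
        (Finset.prod_eq_zero (Finset.mem_Iio.mpr hp) (Pi.single_eq_of_ne hp0 1))
    · by_contra hp2
      exact right_ne_zero_of_mul (left_ne_zero_of_mul hprod)
        (Finset.prod_eq_zero hp (Pi.single_eq_of_ne hp2 1))
    · exact right_ne_zero_of_mul hprod (Finset.prod_eq_zero (Finset.mem_Ioi.mpr hp) rfl)

theorem upperTriangularImage_eq_of_forall_splitCoeff_eq_zero [Infinite K]
    {α : Equiv.Perm (Fin 4) → K} (hα : α ≠ 0) (hsplit : ∀ k u v, splitCoeff α k u v = 0) :
    upperTriangularImage (Fin n) α = {X | ∀ a b : Fin n, (b : ℕ) ≤ a + 1 → X a b = 0} := by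
  refine Set.Subset.antisymm (fun X hX a b hab => ?_) fun Z hZ => ?_
  · rcases le_or_gt b a with hba | hba
    · exact apply_eq_zero_of_mem_upperTriangularImage_of_le
        (splitCoeff_one_one α 0 ▸ hsplit 0 1 1) hX hba
    · exact apply_eq_zero_of_mem_upperTriangularImage_of_covBy hsplit hX
        (Fin.covBy_iff.mpr (Nat.covBy_iff_add_one_eq.mpr (le_antisymm hba hab)))
  · obtain ⟨τ, hτ⟩ := Function.ne_iff.mp hα
    have hcoeff : splitCoeff₂ (fun σ => α (τ * σ)) 1 3 (Pi.single 0 1) (Pi.single 2 1) 0 ≠ 0 := by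
      rwa [splitCoeff₂_single_single_zero, mul_one]
    rw [← upperTriangularImage_mul_left α τ]
    exact mem_upperTriangularImage_of_splitCoeff₂_ne_zero (by decide) hcoeff hZ

end Recursion

theorem stmt18_general {K : Type*} [Field K] [Infinite K] {n : ℕ} (α : Equiv.Perm (Fin 4) → K) :
    upperTriangularImage (Fin n) α = {0} ∨
    upperTriangularImage (Fin n) α =
      {X | ∀ a b : Fin n, (b : ℤ) - (a : ℤ) ≤ 1 → X a b = 0} ∨
    upperTriangularImage (Fin n) α = {X | ∀ a b : Fin n, b ≤ a → X a b = 0} ∨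
    upperTriangularImage (Fin n) α = {X | ∀ a b : Fin n, b < a → X a b = 0} := by
  have hdiff (a b : Fin n) : (b : ℤ) - (a : ℤ) ≤ 1 ↔ (b : ℕ) ≤ a + 1 := by omega
  simp only [hdiff]
  by_cases hsplit : ∃ k u v, splitCoeff α k u v ≠ 0
  · obtain ⟨k, u, v, hk⟩ := hsplit
    by_cases hsum : ∑ σ, α σ = 0
    · exact .inr (.inr (.inl (upperTriangularImage_eq_of_splitCoeff_ne_zero hsum hk)))
    · exact .inr (.inr (.inr (upperTriangularImage_eq_of_sum_ne_zero hsum)))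
  · push Not at hsplit
    rcases eq_or_ne α 0 with rfl | hα
    · exact .inl upperTriangularImage_zero
    · exact .inr (.inl (upperTriangularImage_eq_of_forall_splitCoeff_eq_zero hα hsplit))

/-- Over a field of characteristic zero, the image of a multilinear
polynomial `p = Σ_{σ ∈ S_4} α_σ x_{σ(1)} x_{σ(2)} x_{σ(3)} x_{σ(4)}` of degree four on
`UT_n` is `{0}`, `UT_n^{(1)}`, `UT_n^{(0)}` or `UT_n`. -/
theorem stmt18 {K : Type*} [Field K] [CharZero K] {n : ℕ} (hn : 2 ≤ n)
    (α : Equiv.Perm (Fin 4) → K) :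
    {X : Matrix (Fin n) (Fin n) K | ∃ A : Fin 4 → Matrix (Fin n) (Fin n) K,
        (∀ q, ∀ a b : Fin n, b < a → A q a b = 0) ∧
        X = ∑ σ : Equiv.Perm (Fin 4), α σ • (A (σ 0) * A (σ 1) * A (σ 2) * A (σ 3))}
      = {0} ∨
    {X : Matrix (Fin n) (Fin n) K | ∃ A : Fin 4 → Matrix (Fin n) (Fin n) K,
        (∀ q, ∀ a b : Fin n, b < a → A q a b = 0) ∧
        X = ∑ σ : Equiv.Perm (Fin 4), α σ • (A (σ 0) * A (σ 1) * A (σ 2) * A (σ 3))}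
      = {X : Matrix (Fin n) (Fin n) K | ∀ a b : Fin n, (b : ℤ) - (a : ℤ) ≤ 1 → X a b = 0} ∨
    {X : Matrix (Fin n) (Fin n) K | ∃ A : Fin 4 → Matrix (Fin n) (Fin n) K,
        (∀ q, ∀ a b : Fin n, b < a → A q a b = 0) ∧
        X = ∑ σ : Equiv.Perm (Fin 4), α σ • (A (σ 0) * A (σ 1) * A (σ 2) * A (σ 3))}
      = {X : Matrix (Fin n) (Fin n) K | ∀ a b : Fin n, b ≤ a → X a b = 0} ∨
    {X : Matrix (Fin n) (Fin n) K | ∃ A : Fin 4 → Matrix (Fin n) (Fin n) K,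
        (∀ q, ∀ a b : Fin n, b < a → A q a b = 0) ∧
        X = ∑ σ : Equiv.Perm (Fin 4), α σ • (A (σ 0) * A (σ 1) * A (σ 2) * A (σ 3))}
      = {X : Matrix (Fin n) (Fin n) K | ∀ a b : Fin n, b < a → X a b = 0} := by
  simpa only [upperTriangularImage, multilinearEval_four] using! stmt18_general α
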